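/- (Proposition 3.1, first part) Let (D, F) be a good pair. Then the Hellinger affinity AffH(μ, ν) = ∫_Ω √(p_μ(ω)·p_ν(ω)) P(dω) is a continuous and log-concave function on M × M; that is, AffH is continuous, strictly positive, and (μ, ν) ↦ ln AffH(μ, ν) is concave on M × M. -/

import Mathlib

open MeasureTheory Real Matrix Set
open scoped ENNReal

/-- A "good pair" `(𝒟, ℱ)` in the sense of Juditsky–Nemirovski:
a parametric family of positive probability densities `p μ`, `μ ∈ M`, on `(Ω, P)`,
together with a finite-dimensional linear space `F` of Borel functions on `Ω`
containing the constants, such that log-likelihood ratios belong to `F` and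
`μ ↦ ln ∫ e^{φ} p_μ dP` is well defined (finite, witnessed by integrability)
and concave on `M` for every `φ ∈ F`. -/
structure GoodPair (Ω : Type*) [MeasurableSpace Ω] (P : Measure Ω)
    (E : Type*) [NormedAddCommGroup E] [NormedSpace ℝ E] where
  M : Set E
  p : E → Ω → ℝ
  F : Submodule ℝ (Ω → ℝ)
  M_open : IsOpen M
  M_convex : Convex ℝ M
  p_meas : ∀ μ ∈ M, Measurable (p μ)
  p_pos : ∀ μ ∈ M, ∀ ω, 0 < p μ ω
  p_prob : ∀ μ ∈ M, ∫ ω, p μ ω ∂P = 1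
  F_fd : FiniteDimensional ℝ F
  F_meas : ∀ φ ∈ F, Measurable φ
  F_const : ∀ c : ℝ, (fun _ : Ω => c) ∈ F
  logratio_mem : ∀ μ ∈ M, ∀ ν ∈ M, (fun ω => Real.log (p μ ω / p ν ω)) ∈ F
  F_finite : ∀ φ ∈ F, ∀ μ ∈ M, Integrable (fun ω => Real.exp (φ ω) * p μ ω) P
  F_concave : ∀ φ ∈ F,
    ConcaveOn ℝ M (fun μ => Real.log (∫ ω, Real.exp (φ ω) * p μ ω ∂P))

variable {Ω : Type*} [MeasurableSpace Ω] {P : Measure Ω}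
  {E : Type*} [NormedAddCommGroup E] [NormedSpace ℝ E] {n : ℕ}

/-- The distribution of the observation when the parameter is `μ`:
the measure with density `p μ` with respect to `P`. -/
noncomputable def obsMeasure (D : GoodPair Ω P E) (μ : E) : Measure Ω :=
  P.withDensity fun ω => ENNReal.ofReal (D.p μ ω)

/-- The `ε`-risk of an estimate `ghat` of the linear form `gᵀx`, `x ∈ X`:
`inf {δ | sup_{x ∈ X} Prob_{ω ∼ p_{A(x)}·P} {|ghat ω - gᵀx| > δ} < ε}`. -/
noncomputable def Risk (D : GoodPair Ω P E) (A : (Fin n → ℝ) →ᵃ[ℝ] E)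
    (g : Fin n → ℝ) (X : Set (Fin n → ℝ)) (ghat : Ω → ℝ) (ε : ℝ) : ℝ :=
  sInf {δ : ℝ |
    (⨆ x ∈ X, obsMeasure D (A x) {ω | δ < |ghat ω - g ⬝ᵥ x|}) < ENNReal.ofReal ε}

/-- The minimax optimal `ε`-risk over all (Borel) estimates. -/
noncomputable def RiskStar (D : GoodPair Ω P E) (A : (Fin n → ℝ) →ᵃ[ℝ] E)
    (g : Fin n → ℝ) (X : Set (Fin n → ℝ)) (ε : ℝ) : ℝ :=
  sInf {ρ : ℝ | ∃ ghat : Ω → ℝ, Measurable ghat ∧ ρ = Risk D A g X ghat ε}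

/-- The minimax optimal `ε`-risk over affine estimates, i.e. estimates `φ ∈ F`. -/
noncomputable def RiskAff (D : GoodPair Ω P E) (A : (Fin n → ℝ) →ᵃ[ℝ] E)
    (g : Fin n → ℝ) (X : Set (Fin n → ℝ)) (ε : ℝ) : ℝ :=
  sInf {ρ : ℝ | ∃ φ ∈ D.F, ρ = Risk D A g X φ ε}

/-- The function `Φ_r(x, y; φ, α)`. -/
noncomputable def PhiFun (D : GoodPair Ω P E) (A : (Fin n → ℝ) →ᵃ[ℝ] E)
    (g : Fin n → ℝ) (r : ℝ) (x y : Fin n → ℝ) (φ : Ω → ℝ) (α : ℝ) : ℝ :=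
  g ⬝ᵥ x - g ⬝ᵥ y
    + α * Real.log (∫ ω, Real.exp (φ ω / α) * D.p (A y) ω ∂P)
    + α * Real.log (∫ ω, Real.exp (-φ ω / α) * D.p (A x) ω ∂P)
    + 2 * α * r

/-- `Φ_*(r)` defined through the sup-inf value:
`2Φ_*(r) = sup_{x,y ∈ X} inf_{φ ∈ F, α > 0} Φ_r(x, y; φ, α)`. -/
noncomputable def PhiStarSI (D : GoodPair Ω P E) (A : (Fin n → ℝ) →ᵃ[ℝ] E)
    (g : Fin n → ℝ) (X : Set (Fin n → ℝ)) (r : ℝ) : ℝ :=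
  (1/2) * sSup {v : ℝ | ∃ x ∈ X, ∃ y ∈ X,
    v = sInf {w : ℝ | ∃ φ ∈ D.F, ∃ α : ℝ, 0 < α ∧ w = PhiFun D A g r x y φ α}}

/-- `Φ_*(r)` defined through the inf-sup value:
`2Φ_*(r) = inf_{φ ∈ F, α > 0} sup_{x,y ∈ X} Φ_r(x, y; φ, α)`. -/
noncomputable def PhiStarIS (D : GoodPair Ω P E) (A : (Fin n → ℝ) →ᵃ[ℝ] E)
    (g : Fin n → ℝ) (X : Set (Fin n → ℝ)) (r : ℝ) : ℝ :=
  (1/2) * sInf {v : ℝ | ∃ φ ∈ D.F, ∃ α : ℝ, 0 < α ∧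
    v = sSup {w : ℝ | ∃ x ∈ X, ∃ y ∈ X, w = PhiFun D A g r x y φ α}}

/-- The Hellinger affinity `AffH(μ, ν) = ∫_Ω √(p_μ p_ν) dP`. -/
noncomputable def AffH (D : GoodPair Ω P E) (μ ν : E) : ℝ :=
  ∫ ω, Real.sqrt (D.p μ ω * D.p ν ω) ∂P

namespace GoodPair

theorem log_div_half_mem (D : GoodPair Ω P E) {μ ν : E} (hμ : μ ∈ D.M) (hν : ν ∈ D.M) :
    (fun ω => 1 / 2 * Real.log (D.p ν ω / D.p μ ω)) ∈ D.F :=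
  D.F.smul_mem (1 / 2 : ℝ) (D.logratio_mem ν hν μ hμ)

theorem sqrt_mul_eq_exp_mul (D : GoodPair Ω P E) {μ ν : E} (hμ : μ ∈ D.M) (hν : ν ∈ D.M)
    (ω : Ω) :
    Real.sqrt (D.p μ ω * D.p ν ω)
      = Real.exp (1 / 2 * Real.log (D.p ν ω / D.p μ ω)) * D.p μ ω := by
  have h1 := D.p_pos μ hμ ω
  have h2 := D.p_pos ν hν ω
  rw [mul_comm (1 / 2 : ℝ), ← Real.rpow_def_of_pos (div_pos h2 h1), ← Real.sqrt_eq_rpow,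
    Real.sqrt_eq_iff_mul_self_eq (by positivity) (by positivity)]
  rw [mul_mul_mul_comm, Real.mul_self_sqrt (by positivity)]
  field_simp

theorem integrable_sqrt_mul (D : GoodPair Ω P E) {μ ν : E} (hμ : μ ∈ D.M) (hν : ν ∈ D.M) :
    Integrable (fun ω => Real.sqrt (D.p μ ω * D.p ν ω)) P := by
  simpa only [← D.sqrt_mul_eq_exp_mul hμ hν] using
    D.F_finite _ (D.log_div_half_mem hμ hν) μ hμ

theorem integral_pos_of_pos (D : GoodPair Ω P E) {μ : E} (hμ : μ ∈ D.M) {f : Ω → ℝ}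
    (hf : ∀ ω, 0 < f ω) (hfi : Integrable f P) : 0 < ∫ ω, f ω ∂P := by
  have hP : P ≠ 0 := by
    rintro rfl
    simpa using D.p_prob μ hμ
  rw [integral_pos_iff_support_of_nonneg (fun ω => (hf ω).le) hfi,
    Function.support_eq_univ fun ω => (hf ω).ne']
  exact Measure.measure_univ_pos.2 hP

theorem integral_exp_mul_pos (D : GoodPair Ω P E) {μ : E} (hμ : μ ∈ D.M) {φ : Ω → ℝ}
    (hφ : φ ∈ D.F) : 0 < ∫ ω, Real.exp (φ ω) * D.p μ ω ∂P :=
  D.integral_pos_of_pos hμ (fun ω => mul_pos (Real.exp_pos _) (D.p_pos μ hμ ω))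
    (D.F_finite φ hφ μ hμ)

theorem affH_pos (D : GoodPair Ω P E) {μ ν : E} (hμ : μ ∈ D.M) (hν : ν ∈ D.M) :
    0 < AffH D μ ν :=
  D.integral_pos_of_pos hμ
    (fun ω => Real.sqrt_pos.2 (mul_pos (D.p_pos μ hμ ω) (D.p_pos ν hν ω)))
    (D.integrable_sqrt_mul hμ hν)

/-- Cauchy–Schwarz bound on the Hellinger affinity, in logarithmic form. -/
theorem log_affH_le (D : GoodPair Ω P E) {μ ν : E} (hμ : μ ∈ D.M) (hν : ν ∈ D.M)
    {φ : Ω → ℝ} (hφ : φ ∈ D.F) :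
    Real.log (AffH D μ ν) ≤ 1 / 2 * (Real.log (∫ ω, Real.exp (φ ω) * D.p μ ω ∂P)
      + Real.log (∫ ω, Real.exp ((-φ) ω) * D.p ν ω ∂P)) := by
  have hφ' := D.F.neg_mem hφ
  have ha := D.integral_exp_mul_pos hμ hφ
  have hb := D.integral_exp_mul_pos hν hφ'
  have hia := D.F_finite φ hφ μ hμ
  have hib := D.F_finite (-φ) hφ' ν hν
  set a := ∫ ω, Real.exp (φ ω) * D.p μ ω ∂P with ha_def
  set b := ∫ ω, Real.exp ((-φ) ω) * D.p ν ω ∂P with hb_def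
  have hpt : ∀ ω, Real.sqrt (D.p μ ω * D.p ν ω) ≤ Real.sqrt (a * b) *
      (1 / 2 * (Real.exp (φ ω) * D.p μ ω / a + Real.exp ((-φ) ω) * D.p ν ω / b)) := by
    intro ω
    have h1 := D.p_pos μ hμ ω
    have h2 := D.p_pos ν hν ω
    set u := Real.exp (φ ω) * D.p μ ω / a with hu
    set v := Real.exp ((-φ) ω) * D.p ν ω / b with hv
    have hu0 : 0 < u := by positivity
    have hv0 : 0 < v := by positivity
    have huv : D.p μ ω * D.p ν ω = a * b * (u * v) := by
      rw [hu, hv, Pi.neg_apply, Real.exp_neg]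
      field_simp
    rw [huv, Real.sqrt_mul (by positivity)]
    gcongr
    rw [Real.sqrt_le_left (by positivity)]
    nlinarith [sq_nonneg (u - v)]
  have hle : AffH D μ ν ≤ Real.sqrt (a * b) := by
    calc AffH D μ ν ≤ ∫ ω, Real.sqrt (a * b) * (1 / 2 *
          (Real.exp (φ ω) * D.p μ ω / a + Real.exp ((-φ) ω) * D.p ν ω / b)) ∂P :=
          integral_mono (D.integrable_sqrt_mul hμ hν)
            ((((hia.div_const a).add (hib.div_const b)).const_mul _).const_mul _) hpt
      _ = Real.sqrt (a * b) := by
          rw [integral_const_mul, integral_const_mul,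
            integral_add (hia.div_const a) (hib.div_const b), integral_div, integral_div,
            ← ha_def, ← hb_def, div_self ha.ne', div_self hb.ne']
          norm_num
  calc Real.log (AffH D μ ν) ≤ Real.log (Real.sqrt (a * b)) :=
        Real.log_le_log (D.affH_pos hμ hν) hle
    _ = 1 / 2 * (Real.log a + Real.log b) := by
        rw [Real.log_sqrt (by positivity), Real.log_mul ha.ne' hb.ne']
        ring

/-- The Cauchy–Schwarz bound `log_affH_le` is attained. -/
theorem exists_log_affH_eq (D : GoodPair Ω P E) {μ ν : E} (hμ : μ ∈ D.M) (hν : ν ∈ D.M) :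
    ∃ φ ∈ D.F, Real.log (AffH D μ ν)
      = 1 / 2 * (Real.log (∫ ω, Real.exp (φ ω) * D.p μ ω ∂P)
        + Real.log (∫ ω, Real.exp ((-φ) ω) * D.p ν ω ∂P)) := by
  refine ⟨_, D.log_div_half_mem hμ hν, ?_⟩
  have h1 : ∫ ω, Real.exp (1 / 2 * Real.log (D.p ν ω / D.p μ ω)) * D.p μ ω ∂P
      = AffH D μ ν := by
    simp only [← D.sqrt_mul_eq_exp_mul hμ hν, AffH]
  have h2 : ∫ ω, Real.exp ((-fun ω => 1 / 2 * Real.log (D.p ν ω / D.p μ ω)) ω) * D.p ν ω ∂P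
      = AffH D μ ν := by
    refine integral_congr_ae (Filter.Eventually.of_forall fun ω => ?_)
    beta_reduce
    rw [mul_comm (D.p μ ω), D.sqrt_mul_eq_exp_mul hν hμ, Pi.neg_apply,
      ← inv_div (D.p ν ω), Real.log_inv, mul_neg]
  rw [h1, h2]
  ring

theorem concaveOn_log_affH (D : GoodPair Ω P E) :
    ConcaveOn ℝ (D.M ×ˢ D.M) (fun q : E × E => Real.log (AffH D q.1 q.2)) := by
  have hconv := D.M_convex.prod D.M_convex
  refine ⟨hconv, fun x hx y hy s t hs ht hst => ?_⟩
  have hz := hconv hx hy hs ht hst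
  obtain ⟨φ, hφ, heq⟩ := D.exists_log_affH_eq hz.1 hz.2
  have h1 := (D.F_concave φ hφ).2 hx.1 hy.1 hs ht hst
  have h2 := (D.F_concave (-φ) (D.F.neg_mem hφ)).2 hx.2 hy.2 hs ht hst
  have hxle := mul_le_mul_of_nonneg_left (D.log_affH_le hx.1 hx.2 hφ) hs
  have hyle := mul_le_mul_of_nonneg_left (D.log_affH_le hy.1 hy.2 hφ) ht
  beta_reduce
  rw [heq]
  simp only [smul_eq_mul, Prod.fst_add, Prod.snd_add, Prod.smul_fst, Prod.smul_snd]
    at h1 h2 ⊢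
  linarith

theorem continuousOn_affH [FiniteDimensional ℝ E] (D : GoodPair Ω P E) :
    ContinuousOn (fun q : E × E => AffH D q.1 q.2) (D.M ×ˢ D.M) :=
  (D.concaveOn_log_affH.continuousOn (D.M_open.prod D.M_open)).rexp.congr
    fun _ hq => (Real.exp_log (D.affH_pos hq.1 hq.2)).symm

end GoodPair

/-- **Proposition 3.1, first part.** For a good pair, the Hellinger affinity is
continuous, strictly positive, and log-concave on `M × M`. -/
theorem hellinger_affinity_continuous_logConcave
    {Ω : Type*} [MeasurableSpace Ω] [TopologicalSpace Ω] [PolishSpace Ω] [BorelSpace Ω]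
    {P : Measure Ω} [SigmaFinite P] {m : ℕ}
    (D : GoodPair Ω P (Fin m → ℝ)) :
    ContinuousOn (fun q : (Fin m → ℝ) × (Fin m → ℝ) => AffH D q.1 q.2) (D.M ×ˢ D.M)
    ∧ (∀ μ ∈ D.M, ∀ ν ∈ D.M, 0 < AffH D μ ν)
    ∧ ConcaveOn ℝ (D.M ×ˢ D.M)
        (fun q : (Fin m → ℝ) × (Fin m → ℝ) => Real.log (AffH D q.1 q.2)) :=
  ⟨D.continuousOn_affH, fun _ hμ _ hν => D.affH_pos hμ hν, D.concaveOn_log_affH⟩
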